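/- Let D = {a,b,c,d} and let M be the symmetric {0,1,*}-matrix indexed by D with M_{a,a} = M_{a,b} = M_{b,b} = 0, M_{c,c} = M_{c,d} = M_{d,d} = 0, M_{b,c} = 1, and M_{a,c} = M_{a,d} = M_{b,d} = * (and symmetric entries accordingly). Let G be a finite connected bipartite graph with bipartition (U, V), i.e., every edge of G has one endpoint in U and one endpoint in V. A bipartite clique of G is a set S ⊆ U ∪ V such that every vertex of S ∩ U is adjacent to every vertex of S ∩ V. Then the number of M-partitions of G equals twice the number of bipartite cliques of G. -/

import Mathlib

/-- The three possible entries `0`, `1`, `*` of a matrix-partition matrix. -/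
inductive Entry : Type
  | zero | one | star
deriving DecidableEq

/-- An `M`-partition of a simple graph `G`: adjacent vertices get parts with
`M`-entry in `{1,*}` and distinct non-adjacent vertices get parts with entry in
`{0,*}`. -/
def IsMPartition {D V : Type} (M : D → D → Entry) (G : SimpleGraph V)
    (σ : V → D) : Prop :=
  ∀ u v : V, u ≠ v →
    (G.Adj u v → M (σ u) (σ v) ≠ Entry.zero) ∧
    (¬ G.Adj u v → M (σ u) (σ v) ≠ Entry.one)

/-- The 4×4 matrix of the bipartite-clique lemma, with parts `a,b,c,d = 0,1,2,3`:
`M_{aa}=M_{ab}=M_{bb}=M_{cc}=M_{cd}=M_{dd}=0`, `M_{bc}=1`, `M_{ac}=M_{ad}=M_{bd}=*`. -/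
def M13 : Fin 4 → Fin 4 → Entry :=
  ![![Entry.zero, Entry.zero, Entry.star, Entry.star],
    ![Entry.zero, Entry.zero, Entry.one,  Entry.star],
    ![Entry.star, Entry.one,  Entry.zero, Entry.zero],
    ![Entry.star, Entry.star, Entry.zero, Entry.zero]]

/-!
Send each vertex to the pair (side, core), where the side separates `{a, b}` from `{c, d}` and the
core parts are `b` and `c`. The entry of the matrix is `0` exactly within a side, and `1` exactly
between core parts on opposite sides. An `M13`-partition is therefore a proper 2-colouring (the
sides) together with a set of vertices (the core) that are adjacent as soon as their colours differ.
A connected bipartite graph has exactly two proper 2-colourings, and they agree on which pairs of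
vertices have different colours, so each of them leaves the same choices of core: the bipartite
cliques.
-/

open Cardinal

section BoolColoring

variable {W : Type*} {G : SimpleGraph W}

theorem boolColoring_eq_iff_eq (hG : G.Preconnected) (c c' : G.Coloring Bool) (u v : W) :
    c u = c v ↔ c' u = c' v := by
  obtain ⟨p⟩ := hG u v
  rw [Bool.eq_iff_iff, ← c.even_length_iff_congr p, c'.even_length_iff_congr p, ← Bool.eq_iff_iff]

theorem boolColoring_eq_of_apply_eq (hG : G.Preconnected) {c c' : G.Coloring Bool} {v : W}
    (h : c v = c' v) : c = c' := by
  ext u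
  have hu : c u = c v ↔ c' u = c v := h ▸ boolColoring_eq_iff_eq hG c c' u v
  by_cases huv : c u = c v
  · rw [huv, hu.mp huv]
  · rw [Bool.eq_not.mpr huv, Bool.eq_not.mpr (mt hu.mpr huv)]

theorem bijective_boolColoring_apply (hG : G.Preconnected) (c : G.Coloring Bool) (v : W) :
    Function.Bijective fun c' : G.Coloring Bool => c' v := by
  refine ⟨fun _ _ h => boolColoring_eq_of_apply_eq hG h, fun b => ?_⟩
  by_cases h : c v = b
  · exact ⟨c, h⟩
  · exact ⟨G.recolorOfEquiv Equiv.boolNot c, Bool.not_eq.mpr h⟩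

end BoolColoring

section PartiteClique

variable {W α β : Type*} {G : SimpleGraph W}

/-- A partite clique of `G` with respect to the classes of `c : W → α`: a set in which any two
vertices of different classes are adjacent. For a bipartition, encoded as a map to a two-element
type, these are the bipartite cliques. -/
def IsPartiteClique (G : SimpleGraph W) (c : W → α) (S : Set W) : Prop :=
  ∀ ⦃u⦄, u ∈ S → ∀ ⦃v⦄, v ∈ S → c u ≠ c v → G.Adj u v

theorem isPartiteClique_congr {c : W → α} {c' : W → β} (h : ∀ u v, c u = c v ↔ c' u = c' v)
    (S : Set W) : IsPartiteClique G c S ↔ IsPartiteClique G c' S := by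
  simp only [IsPartiteClique, ne_eq, h]

theorem isPartiteClique_decide_mem_iff (U : Set W) [DecidablePred (· ∈ U)] (S : Set W) :
    IsPartiteClique G (fun v => decide (v ∈ U)) S ↔ ∀ u ∈ S ∩ U, ∀ v ∈ S ∩ Uᶜ, G.Adj u v := by
  simp only [IsPartiteClique, ne_eq, decide_eq_decide]
  constructor
  · rintro h u ⟨huS, huU⟩ v ⟨hvS, hvU⟩
    exact h huS hvS fun huv => hvU (huv.mp huU)
  · intro h u huS v hvS huv
    by_cases huU : u ∈ U
    · exact h u ⟨huS, huU⟩ v ⟨hvS, fun hvU => huv (iff_of_true huU hvU)⟩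
    · have hvU : v ∈ U := by_contra fun hvU => huv (iff_of_false huU hvU)
      exact (h v ⟨hvS, hvU⟩ u ⟨huS, huU⟩).symm

end PartiteClique

section Parts

/-- The side of a part: `false` on `{a, b}` and `true` on `{c, d}`. -/
def partSide : Fin 4 → Bool := ![false, false, true, true]

/-- The indicator of the core parts `b` and `c`, the two joined by the entry `1` of `M13`. -/
def partCore : Fin 4 → Bool := ![false, true, true, false]

/-- The encoding of a part by its side and its core indicator. -/
def partEquiv : Fin 4 ≃ Bool × Bool where
  toFun x := (partSide x, partCore x)
  invFun
    | (false, false) => 0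
    | (false, true) => 1
    | (true, true) => 2
    | (true, false) => 3
  left_inv := by decide
  right_inv := by decide

theorem partSide_partEquiv_symm (p : Bool × Bool) : partSide (partEquiv.symm p) = p.1 :=
  congrArg Prod.fst (partEquiv.apply_symm_apply p)

theorem partCore_partEquiv_symm (p : Bool × Bool) : partCore (partEquiv.symm p) = p.2 :=
  congrArg Prod.snd (partEquiv.apply_symm_apply p)

theorem M13_eq_zero_iff : ∀ x y, M13 x y = Entry.zero ↔ partSide x = partSide y := by
  decide

theorem M13_eq_one_iff : ∀ x y,
    M13 x y = Entry.one ↔ partCore x = true ∧ partCore y = true ∧ partSide x ≠ partSide y := by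
  decide

end Parts

section MPartition

variable {W : Type} {G : SimpleGraph W}

theorem isMPartition_M13_iff {σ : W → Fin 4} :
    IsMPartition M13 G σ ↔ (∀ ⦃u v⦄, G.Adj u v → partSide (σ u) ≠ partSide (σ v)) ∧
      IsPartiteClique G (fun v => partSide (σ v)) {v | partCore (σ v) = true} := by
  simp only [IsMPartition, ne_eq, M13_eq_zero_iff, M13_eq_one_iff]
  constructor
  · intro h
    refine ⟨fun u v huv => (h u v huv.ne).1 huv, fun u hu v hv huv => ?_⟩
    have hne : u ≠ v := fun e => huv (congrArg (fun w => partSide (σ w)) e)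
    exact by_contra fun hadj => (h u v hne).2 hadj ⟨hu, hv, huv⟩
  · rintro ⟨hproper, hclique⟩ u v -
    exact ⟨fun huv => hproper huv, fun hadj ⟨hu, hv, huv⟩ => hadj (hclique hu hv huv)⟩

open Classical in
/-- The decomposition of an `M13`-partition into the 2-colouring given by the sides and the partite
clique formed by the vertices in core parts. -/
noncomputable def mPartitionEquiv (G : SimpleGraph W) :
    {σ : W → Fin 4 // IsMPartition M13 G σ} ≃
      Σ c : G.Coloring Bool, {S : Set W // IsPartiteClique G c S} where
  toFun σ :=
    ⟨SimpleGraph.Coloring.mk (fun v => partSide (σ.1 v)) fun h =>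
        (isMPartition_M13_iff.mp σ.2).1 h,
      {v | partCore (σ.1 v) = true}, (isMPartition_M13_iff.mp σ.2).2⟩
  invFun p :=
    ⟨fun v => partEquiv.symm (p.1 v, decide (v ∈ p.2.1)), by
      simp only [isMPartition_M13_iff, partSide_partEquiv_symm, partCore_partEquiv_symm,
        decide_eq_true_eq, Set.ofPred_mem_eq]
      exact ⟨fun _ _ h => p.1.valid h, p.2.2⟩⟩
  left_inv σ := by
    ext1
    funext v
    simp only [Set.mem_ofPred_eq, Bool.decide_eq_true]
    exact partEquiv.symm_apply_apply (σ.1 v)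
  right_inv p := by
    refine Sigma.subtype_ext (RelHom.ext fun v => ?_) (Set.ext fun v => ?_)
    · exact partSide_partEquiv_symm _
    · simp only [Set.mem_ofPred_eq, partCore_partEquiv_symm, decide_eq_true_eq]

theorem mk_mPartition_M13 (hG : G.Connected) (c : G.Coloring Bool) :
    #{σ : W → Fin 4 // IsMPartition M13 G σ} = 2 * #{S : Set W // IsPartiteClique G c S} := by
  obtain ⟨v⟩ := hG.nonempty
  let cliqueEquiv (c' : G.Coloring Bool) :
      {S // IsPartiteClique G c' S} ≃ {S // IsPartiteClique G c S} :=
    Equiv.subtypeEquivRight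
      (isPartiteClique_congr (boolColoring_eq_iff_eq hG.preconnected c' c))
  let evalEquiv : G.Coloring Bool ≃ Bool :=
    Equiv.ofBijective _ (bijective_boolColoring_apply hG.preconnected c v)
  calc #{σ : W → Fin 4 // IsMPartition M13 G σ}
      = #(G.Coloring Bool × {S : Set W // IsPartiteClique G c S}) :=
        mk_congr ((mPartitionEquiv G).trans (Equiv.sigmaEquivProdOfEquiv cliqueEquiv))
    _ = 2 * #{S : Set W // IsPartiteClique G c S} := by
        rw [← mul_def, mk_congr evalEquiv, mk_bool]

end MPartition

theorem stmt13_general {VV : Type} (G : SimpleGraph VV) (hconn : G.Connected)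
    (U V : Set VV) (hcover : U ∪ V = Set.univ) (hdisj : U ∩ V = ∅)
    (hbip : ∀ u v : VV, G.Adj u v → (u ∈ U ∧ v ∈ V) ∨ (u ∈ V ∧ v ∈ U)) :
    #{σ : VV → Fin 4 // IsMPartition M13 G σ} =
      2 * #{S : Set VV // ∀ u ∈ S ∩ U, ∀ v ∈ S ∩ V, G.Adj u v} := by
  classical
  obtain rfl : Uᶜ = V := (IsCompl.of_eq hdisj hcover).compl_eq
  let c : G.Coloring Bool := SimpleGraph.Coloring.mk (fun v => decide (v ∈ U)) fun {u v} huv => by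
    rcases hbip u v huv with ⟨hu, hv⟩ | ⟨hu, hv⟩ <;> simp_all
  rw [mk_mPartition_M13 hconn c]
  exact congrArg (2 * ·) (mk_congr (Equiv.subtypeEquivRight (isPartiteClique_decide_mem_iff U)))

/-- For a finite connected bipartite graph `G` with bipartition `(U,V)`, the number of
`M13`-partitions of `G` is twice the number of bipartite cliques of `G`. -/
theorem stmt13 {VV : Type} [Fintype VV] (G : SimpleGraph VV) (hconn : G.Connected)
    (U V : Set VV) (hcover : U ∪ V = Set.univ) (hdisj : U ∩ V = ∅)
    (hbip : ∀ u v : VV, G.Adj u v → (u ∈ U ∧ v ∈ V) ∨ (u ∈ V ∧ v ∈ U)) :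
    Nat.card {σ : VV → Fin 4 // IsMPartition M13 G σ} =
      2 * Nat.card {S : Set VV // ∀ u ∈ S ∩ U, ∀ v ∈ S ∩ V, G.Adj u v} := by
  simpa only [Nat.card, map_mul, toNat_ofNat] using
    congrArg toNat (stmt13_general G hconn U V hcover hdisj hbip)
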